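/- arXiv:0710.4510 — 4 statements merged into one kernel-verified Lean document; each statement's English description precedes it below -/
import Mathlib

section
/- Let k be a field of characteristic zero, let U be a perfect Lie algebra over k (i.e. U is spanned by brackets [u₁,u₂] of its elements), and let M and N be k-vector spaces. Suppose given k-bilinear maps a_M : U × M → M, a_N : U × N → N and f : U × M → N satisfying: (1) (projected Jacobi identity) for all u₁, u₂ ∈ U and m ∈ M, f(u₁, a_M(u₂, m)) + a_N(u₁, f(u₂, m)) − f(u₂, a_M(u₁, m)) − a_N(u₂, f(u₁, m)) − f([u₁,u₂], m) = 0; and (2) (derivation property) for all u₁, u₂ ∈ U and m ∈ M, a_N(u₁, f(u₂, m)) = f([u₁,u₂], m) + f(u₂, a_M(u₁, m)). Then f(u, m) = 0 for all u ∈ U and m ∈ M. -/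
section Bilinear

variable {R U M N : Type*} [CommRing R] [LieRing U] [LieAlgebra R U]
  [AddCommGroup M] [Module R M] [AddCommGroup N] [Module R N]
  {aM : U → M → M} {aN : U → N → N} {f : U →ₗ[R] M →ₗ[R] N}

theorem jacobi_defect_eq_apply_lie
    (hder : ∀ (u₁ u₂ : U) (m : M), aN u₁ (f u₂ m) = f ⁅u₁, u₂⁆ m + f u₂ (aM u₁ m))
    (u₁ u₂ : U) (m : M) :
    f u₁ (aM u₂ m) + aN u₁ (f u₂ m) - f u₂ (aM u₁ m) - aN u₂ (f u₁ m) - f ⁅u₁, u₂⁆ m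
      = f ⁅u₁, u₂⁆ m := by
  have skew : f ⁅u₂, u₁⁆ m = -f ⁅u₁, u₂⁆ m := by
    rw [← lie_skew, map_neg, LinearMap.neg_apply]
  rw [hder u₁ u₂, hder u₂ u₁, skew]
  abel

theorem stmt0_general
    (hperf : Submodule.span R {x : U | ∃ u₁ u₂ : U, ⁅u₁, u₂⁆ = x} = ⊤)
    (hjac : ∀ (u₁ u₂ : U) (m : M),
      f u₁ (aM u₂ m) + aN u₁ (f u₂ m) - f u₂ (aM u₁ m) - aN u₂ (f u₁ m)
        - f ⁅u₁, u₂⁆ m = 0)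
    (hder : ∀ (u₁ u₂ : U) (m : M), aN u₁ (f u₂ m) = f ⁅u₁, u₂⁆ m + f u₂ (aM u₁ m)) :
    f = 0 := by
  have apply_lie (u₁ u₂ : U) : f ⁅u₁, u₂⁆ = 0 :=
    LinearMap.ext fun m => (jacobi_defect_eq_apply_lie hder u₁ u₂ m).symm.trans (hjac u₁ u₂ m)
  refine LinearMap.ext_on hperf ?_
  rintro _ ⟨u₁, u₂, rfl⟩
  exact apply_lie u₁ u₂

end Bilinear

/-- Degree-zero algebraic core of Proposition 5.5: if `U` is a perfect Lie algebra
over a field `k` of characteristic zero acting (via bilinear maps `aM`, `aN`) on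
vector spaces `M`, `N`, and `f : U × M → N` is bilinear satisfying the projected
Jacobi identity and the derivation property, then `f = 0`. -/
theorem stmt0 (k : Type) [Field k] [CharZero k]
    (U : Type) [LieRing U] [LieAlgebra k U]
    (hperf : Submodule.span k {x : U | ∃ u₁ u₂ : U, ⁅u₁, u₂⁆ = x} = ⊤)
    (M N : Type) [AddCommGroup M] [Module k M] [AddCommGroup N] [Module k N]
    (aM : U →ₗ[k] M →ₗ[k] M) (aN : U →ₗ[k] N →ₗ[k] N) (f : U →ₗ[k] M →ₗ[k] N)
    (h1 : ∀ (u₁ u₂ : U) (m : M),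
      f u₁ (aM u₂ m) + aN u₁ (f u₂ m) - f u₂ (aM u₁ m) - aN u₂ (f u₁ m)
        - f ⁅u₁, u₂⁆ m = 0)
    (h2 : ∀ (u₁ u₂ : U) (m : M),
      aN u₁ (f u₂ m) = f ⁅u₁, u₂⁆ m + f u₂ (aM u₁ m)) :
    ∀ (u : U) (m : M), f u m = 0 := by
  exact LinearMap.congr_fun₂ (stmt0_general (aM := (aM · ·)) (aN := (aN · ·)) hperf h1 h2)
end

section
/- Let k be a field of characteristic zero and d ≥ 1. Let R = k[t₁,…,t_d] and S = k[x₁,…,x_d] be polynomial rings, and make R into an S-module via the k-algebra homomorphism S → End_k(R) sending x_i to the partial derivative ∂/∂t_i (this is well defined since the partial derivatives commute). Then R is an injective S-module. -/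
/-!
A functional `ε` on an `S`-module `Q` yields the map `q ↦ (s ↦ ε (s q))` from `Q` to the dual of
`S`. If this identifies `Q` with the functionals on `S` that are continuous for the `m`-adic
topology, then `Q` satisfies Baer's criterion: an `S`-linear map `g` from an ideal `I` to the
`m`-power torsion module `Q` kills `I ∩ mⁿ` for large `n` by Artin–Rees, so `ε ∘ g` extends to a
functional on `S` vanishing on `mⁿ`, and the element `q` representing that functional extends `g`
by `s ↦ s q`.

For polynomials under differentiation and `ε` the constant coefficient, `ε (xᵃ p)` is `a!` times the
coefficient of `tᵃ` in `p`. When the factorials are invertible, polynomials therefore correspond to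
the functionals vanishing on monomials of large degree, i.e. on a power of `(x₁, …, x_d)`.
-/

open MvPolynomial

section PowerTorsion

variable {S M Q : Type*} [CommRing S] [AddCommGroup M] [Module S M] [AddCommGroup Q] [Module S Q]
  {m : Ideal S}

theorem exists_pow_smul_eq_bot_of_fg (torsion : ∀ q : Q, ∃ n : ℕ, ∀ s ∈ m ^ n, s • q = 0)
    {N : Submodule S Q} (hN : N.FG) : ∃ n : ℕ, m ^ n • N = ⊥ := by
  induction N, hN using Submodule.fg_induction with
  | singleton q =>
    obtain ⟨n, hn⟩ := torsion q
    refine ⟨n, eq_bot_iff.2 (Submodule.smul_le.2 fun s hs y hy => ?_)⟩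
    obtain ⟨r, rfl⟩ := Submodule.mem_span_singleton.1 hy
    rw [smul_comm, hn s hs, smul_zero]
    exact zero_mem _
  | sup N₁ N₂ _ _ ih₁ ih₂ =>
    obtain ⟨n₁, h₁⟩ := ih₁
    obtain ⟨n₂, h₂⟩ := ih₂
    refine ⟨n₁ + n₂, ?_⟩
    rw [Submodule.smul_sup, pow_add, mul_comm, Submodule.mul_smul, h₁, mul_comm,
      Submodule.mul_smul, h₂, Submodule.smul_bot, Submodule.smul_bot, sup_bot_eq]

theorem exists_forall_mem_pow_smul_top_map_eq_zero [IsNoetherianRing S] [Module.Finite S M]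
    (torsion : ∀ q : Q, ∃ n : ℕ, ∀ s ∈ m ^ n, s • q = 0) (N : Submodule S M) (g : N →ₗ[S] Q) :
    ∃ n : ℕ, ∀ x : N, (x : M) ∈ m ^ n • (⊤ : Submodule S M) → g x = 0 := by
  obtain ⟨n, hn⟩ : ∃ n : ℕ, m ^ n • LinearMap.range g = ⊥ :=
    exists_pow_smul_eq_bot_of_fg torsion (Module.Finite.iff_fg.1 inferInstance)
  obtain ⟨c, artinRees⟩ := Ideal.exists_pow_inf_eq_pow_smul m N
  refine ⟨n + c, fun x hx => ?_⟩
  have mem_smul : (x : M) ∈ m ^ n • N := by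
    have mem_inf : (x : M) ∈ m ^ (n + c) • (⊤ : Submodule S M) ⊓ N := ⟨hx, x.2⟩
    rw [artinRees (n + c) (Nat.le_add_left c n), Nat.add_sub_cancel] at mem_inf
    exact Submodule.smul_mono le_rfl inf_le_right mem_inf
  have mem_smul_top : x ∈ m ^ n • (⊤ : Submodule S N) := by
    have map_smul_top : (m ^ n • (⊤ : Submodule S N)).map N.subtype = m ^ n • N := by
      rw [Submodule.map_smul'', N.map_subtype_top]
    rw [← map_smul_top] at mem_smul
    obtain ⟨y, hy, hyx⟩ := mem_smul
    rwa [← Subtype.ext hyx]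
  have map_mem : g x ∈ m ^ n • LinearMap.range g := by
    rw [LinearMap.range_eq_map, ← Submodule.map_smul'']
    exact Submodule.mem_map_of_mem mem_smul_top
  rwa [hn, Submodule.mem_bot] at map_mem

end PowerTorsion

theorem exists_extension_eq_zero_on {k M E : Type*} [Ring k] [AddCommGroup M] [Module k M]
    [AddCommGroup E] [Module k E] (hE : Module.Baer k E) (N P : Submodule k M) (f : N →ₗ[k] E)
    (hf : ∀ x : N, (x : M) ∈ P → f x = 0) :
    ∃ l : M →ₗ[k] E, (∀ x : N, l x = f x) ∧ ∀ x ∈ P, l x = 0 := by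
  let fPartial : M →ₗ.[k] E := ⟨N, f⟩
  let zeroPartial : M →ₗ.[k] E := ⟨P, 0⟩
  have agree : ∀ (x : fPartial.domain) (y : zeroPartial.domain), (x : M) = y →
      fPartial x = zeroPartial y := fun x y hxy => hf x (hxy ▸ y.2)
  let glued := fPartial.sup zeroPartial agree
  obtain ⟨l, hl⟩ :=
    hE.extension_property glued.domain.subtype glued.domain.subtype_injective glued.toFun
  refine ⟨l, fun x => ?_, fun x hx => ?_⟩
  · have left_le := fPartial.left_le_sup zeroPartial agree
    exact (LinearMap.congr_fun hl ⟨x, left_le.1 x.2⟩).trans (left_le.2 rfl).symm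
  · have right_le := fPartial.right_le_sup zeroPartial agree
    exact (LinearMap.congr_fun hl ⟨x, right_le.1 hx⟩).trans
      (right_le.2 (x := ⟨x, hx⟩) rfl).symm

section MatrixCoeff

variable {k S Q E : Type*} [CommRing k] [CommRing S] [Algebra k S] [AddCommGroup Q] [Module k Q]
  [AddCommGroup E] [Module k E]

/-- The matrix coefficient `s ↦ ε (φ s q)` of a representation `φ` of `S` on `Q`, as a function of
`q`; it compares `Q` with functionals on `S`. The functional `ε` may take values in any `k`-module
`E`. -/
def matrixCoeff (φ : S →ₐ[k] Module.End k Q) (ε : Q →ₗ[k] E) : Q →ₗ[k] S →ₗ[k] E :=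
  (φ.toLinearMap.compr₂ ε).flip

@[simp]
theorem matrixCoeff_apply (φ : S →ₐ[k] Module.End k Q) (ε : Q →ₗ[k] E) (q : Q) (s : S) :
    matrixCoeff φ ε q s = ε (φ s q) :=
  rfl

/-- Continuity of a functional for the `m`-adic topology on `S` and the discrete topology on `E`,
expressed as vanishing on some power of `m`. -/
def IsAdicContinuous (m : Ideal S) (l : S →ₗ[k] E) : Prop :=
  ∃ n : ℕ, ∀ s ∈ m ^ n, l s = 0

variable {φ : S →ₐ[k] Module.End k Q} {ε : Q →ₗ[k] E} {m : Ideal S}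

theorem exists_forall_mem_pow_apply_eq_zero (injective : Function.Injective (matrixCoeff φ ε))
    {q : Q} (hq : IsAdicContinuous m (matrixCoeff φ ε q)) :
    ∃ n : ℕ, ∀ s ∈ m ^ n, φ s q = 0 := by
  obtain ⟨n, hn⟩ := hq
  refine ⟨n, fun s hs => injective (LinearMap.ext fun t => ?_)⟩
  simpa using hn (t * s) (Ideal.mul_mem_left _ t hs)

theorem baer_compHom_of_range_matrixCoeff [IsNoetherianRing S] (hE : Module.Baer k E)
    (injective : Function.Injective (matrixCoeff φ ε))
    (mem_range_iff : ∀ l, l ∈ LinearMap.range (matrixCoeff φ ε) ↔ IsAdicContinuous m l) :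
    @Module.Baer S _ Q _ (Module.compHom Q φ.toRingHom) := by
  let _ : Module S Q := Module.compHom Q φ.toRingHom
  have : IsScalarTower k S Q := ⟨fun c s q => LinearMap.congr_fun (map_smul φ c s) q⟩
  intro I g
  have torsion (q : Q) : ∃ n : ℕ, ∀ s ∈ m ^ n, s • q = 0 :=
    exists_forall_mem_pow_apply_eq_zero injective ((mem_range_iff _).1 ⟨q, rfl⟩)
  obtain ⟨n, hn⟩ := exists_forall_mem_pow_smul_top_map_eq_zero torsion I g
  obtain ⟨l, l_eq, l_vanish⟩ := exists_extension_eq_zero_on hE (I.restrictScalars k)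
    ((m ^ n).restrictScalars k) (ε ∘ₗ g.restrictScalars k) fun x hx =>
      (congrArg ε (hn x (by simpa using hx))).trans (map_zero ε)
  obtain ⟨q, rfl⟩ : l ∈ LinearMap.range (matrixCoeff φ ε) := (mem_range_iff l).2 ⟨n, l_vanish⟩
  refine ⟨LinearMap.toSpanSingleton S Q q, fun x hx => injective (LinearMap.ext fun s => ?_)⟩
  calc ε (s • x • q) = matrixCoeff φ ε q (s * x) := by rw [smul_smul]; rfl
    _ = ε (g (s • ⟨x, hx⟩)) := l_eq (s • ⟨x, hx⟩ : I)
    _ = ε (s • g ⟨x, hx⟩) := by rw [map_smul]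

end MatrixCoeff

section Differentiation

variable {σ k : Type*}

/-- The multi-index factorial `a! = ∏ i, (a i)!`, the factor by which `∂ᵃ` scales the coefficient of
`tᵃ`. The product runs over the support of `a`, so `σ` may be infinite. -/
def multiFactorial (a : σ →₀ ℕ) : ℕ :=
  a.prod fun _ n => n.factorial

theorem multiFactorial_single_add {i : σ} {a : σ →₀ ℕ} (hi : i ∉ a.support) (n : ℕ) :
    multiFactorial (Finsupp.single i n + a) = n.factorial * multiFactorial a := by
  classical
  have disjoint : Disjoint (Finsupp.single i n).support a.support :=
    (Finset.disjoint_singleton_left.2 hi).mono_left Finsupp.support_single_subset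
  rw [multiFactorial, Finsupp.prod_add_index_of_disjoint disjoint, multiFactorial,
    Finsupp.prod_single_index Nat.factorial_zero]

theorem coeff_iterate_pderiv [CommSemiring k] (i : σ) (n : ℕ) (p : MvPolynomial σ k)
    (b : σ →₀ ℕ) :
    coeff b ((pderiv i)^[n] p) =
      (b i + 1).ascFactorial n * coeff (b + Finsupp.single i n) p := by
  induction n generalizing p with
  | zero => simp
  | succ n ih =>
    rw [Function.iterate_succ_apply, ih, coeff_pderiv, add_assoc, ← Finsupp.single_add,
      Nat.ascFactorial_succ]
    simp only [Finsupp.coe_add, Pi.add_apply, Finsupp.single_eq_same, Nat.cast_add, Nat.cast_mul,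
      Nat.cast_one, Finsupp.single_add]
    ring

theorem coeff_zero_apply_monomial [CommSemiring k]
    {φ : MvPolynomial σ k →ₐ[k] Module.End k (MvPolynomial σ k)}
    (hφ : ∀ i, φ (X i) = (pderiv i).toLinearMap) (a : σ →₀ ℕ) (p : MvPolynomial σ k) :
    coeff 0 (φ (monomial a 1) p) = multiFactorial a * coeff a p := by
  induction a using Finsupp.induction generalizing p with
  | zero => simp [multiFactorial, ← C_apply]
  | single_add i n a hi _ ih =>
    have iterate : φ (X i ^ n) p = (pderiv i)^[n] p := by
      rw [map_pow, hφ, Module.End.pow_apply]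
      rfl
    have ha : a i = 0 := Finsupp.notMem_support_iff.1 hi
    rw [monomial_single_add, mul_comm, map_mul, Module.End.mul_apply, ih, iterate,
      coeff_iterate_pderiv, ha, zero_add, Nat.one_ascFactorial, multiFactorial_single_add hi,
      add_comm a]
    push_cast
    ring

theorem monomial_mem_pow_idealOfVars_of_le_degree [CommSemiring k] {n : ℕ} {a : σ →₀ ℕ}
    (h : n ≤ a.degree) (c : k) :
    monomial a c ∈ idealOfVars σ k ^ n := by
  classical
  rw [mem_pow_idealOfVars_iff]
  intro b hb
  rwa [Finset.mem_singleton.1 (support_monomial_subset hb)]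

theorem isUnit_multiFactorial [Semiring k] [Algebra ℚ k] (a : σ →₀ ℕ) :
    IsUnit (multiFactorial a : k) := by
  have ne_zero : multiFactorial a ≠ 0 :=
    Finset.prod_ne_zero_iff.2 fun i _ => Nat.factorial_ne_zero (a i)
  simpa using (Nat.cast_ne_zero (R := ℚ).2 ne_zero).isUnit.map (algebraMap ℚ k)

variable [CommRing k] {φ : MvPolynomial σ k →ₐ[k] Module.End k (MvPolynomial σ k)}

theorem matrixCoeff_lcoeff_zero_monomial (hφ : ∀ i, φ (X i) = (pderiv i).toLinearMap)
    (p : MvPolynomial σ k) (a : σ →₀ ℕ) (c : k) :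
    matrixCoeff φ (lcoeff k 0) p (monomial a c) = c * (multiFactorial a * coeff a p) := by
  have monomial_eq_smul : monomial a c = c • monomial a (1 : k) := by
    rw [smul_monomial, smul_eq_mul, mul_one]
  rw [monomial_eq_smul, map_smul, matrixCoeff_apply, lcoeff_apply,
    coeff_zero_apply_monomial hφ, smul_eq_mul]

theorem matrixCoeff_lcoeff_zero_injective [Algebra ℚ k]
    (hφ : ∀ i, φ (X i) = (pderiv i).toLinearMap) :
    Function.Injective (matrixCoeff φ (lcoeff k 0)) := by
  intro p q hpq
  ext a
  have eq_at_monomial := LinearMap.congr_fun hpq (monomial a 1)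
  simp only [matrixCoeff_lcoeff_zero_monomial hφ, one_mul] at eq_at_monomial
  exact (isUnit_multiFactorial a).mul_left_cancel eq_at_monomial

theorem isAdicContinuous_matrixCoeff_lcoeff_zero (hφ : ∀ i, φ (X i) = (pderiv i).toLinearMap)
    (p : MvPolynomial σ k) :
    IsAdicContinuous (idealOfVars σ k) (matrixCoeff φ (lcoeff k 0) p) := by
  refine ⟨p.totalDegree + 1, fun s hs => ?_⟩
  rw [mem_pow_idealOfVars_iff] at hs
  rw [s.as_sum, map_sum]
  refine Finset.sum_eq_zero fun a ha => ?_
  have coeff_eq_zero : coeff a p = 0 := coeff_eq_zero_of_totalDegree_lt (hs a ha)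
  rw [matrixCoeff_lcoeff_zero_monomial hφ, coeff_eq_zero, mul_zero, mul_zero]

theorem exists_matrixCoeff_lcoeff_zero_eq [Algebra ℚ k] [Finite σ]
    (hφ : ∀ i, φ (X i) = (pderiv i).toLinearMap) {l : MvPolynomial σ k →ₗ[k] k}
    (hl : IsAdicContinuous (idealOfVars σ k) l) :
    ∃ p, matrixCoeff φ (lcoeff k 0) p = l := by
  classical
  obtain ⟨n, hn⟩ := hl
  let lowDegree : Finset (σ →₀ ℕ) := (Finsupp.finite_of_degree_le n).toFinset
  let p : MvPolynomial σ k := ∑ a ∈ lowDegree,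
    monomial a (Ring.inverse (multiFactorial a : k) * l (monomial a 1))
  have coeff_p (a : σ →₀ ℕ) : multiFactorial a * coeff a p = l (monomial a 1) := by
    simp only [p, coeff_sum, coeff_monomial, Finset.sum_ite_eq']
    split_ifs with ha
    · exact Ring.mul_inverse_cancel_left _ _ (isUnit_multiFactorial a)
    · have le_degree : n ≤ a.degree :=
        not_lt.1 fun h => ha (by simpa [lowDegree] using h.le)
      rw [mul_zero, hn _ (monomial_mem_pow_idealOfVars_of_le_degree le_degree 1)]
  refine ⟨p, linearMap_ext fun a => LinearMap.ext_ring ?_⟩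
  simpa [coeff_p] using matrixCoeff_lcoeff_zero_monomial hφ p a 1

theorem mem_range_matrixCoeff_lcoeff_zero_iff [Algebra ℚ k] [Finite σ]
    (hφ : ∀ i, φ (X i) = (pderiv i).toLinearMap) (l : MvPolynomial σ k →ₗ[k] k) :
    l ∈ LinearMap.range (matrixCoeff φ (lcoeff k 0)) ↔ IsAdicContinuous (idealOfVars σ k) l := by
  constructor
  · rintro ⟨p, rfl⟩
    exact isAdicContinuous_matrixCoeff_lcoeff_zero hφ p
  · exact exists_matrixCoeff_lcoeff_zero_eq hφ

end Differentiation

theorem stmt3_general {k σ : Type*} [CommRing k] [IsNoetherianRing k] [Algebra ℚ k]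
    [Module.Injective k k] [Finite σ]
    (φ : MvPolynomial σ k →ₐ[k] Module.End k (MvPolynomial σ k))
    (hφ : ∀ i : σ, φ (X i) = (pderiv i).toLinearMap) :
    @Module.Injective (MvPolynomial σ k) _ (MvPolynomial σ k) _
      (Module.compHom _ φ.toRingHom) :=
  let _ := Module.compHom (MvPolynomial σ k) φ.toRingHom
  Module.Baer.injective <|
    baer_compHom_of_range_matrixCoeff (Module.Baer.of_injective ‹_›)
      (matrixCoeff_lcoeff_zero_injective hφ) (mem_range_matrixCoeff_lcoeff_zero_iff hφ)

/-- `R = k[t₁,…,t_d]` is injective as a module over `S = k[x₁,…,x_d]`, where `S`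
acts on `R` through the `k`-algebra homomorphism `S → End_k(R)` sending `x_i` to the
partial derivative `∂/∂t_i`. -/
theorem stmt3 (k : Type) [Field k] [CharZero k] (d : ℕ) (hd : 1 ≤ d)
    (φ : MvPolynomial (Fin d) k →ₐ[k] Module.End k (MvPolynomial (Fin d) k))
    (hφ : ∀ i : Fin d, φ (MvPolynomial.X i) = (MvPolynomial.pderiv i).toLinearMap) :
    @Module.Injective (MvPolynomial (Fin d) k) _ (MvPolynomial (Fin d) k) _
      (Module.compHom _ φ.toRingHom) :=
  have : Module.Injective k k := Module.injective_of_isSemisimpleRing k k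
  stmt3_general φ hφ
end

section
/- Let k be a field of characteristic zero and d ≥ 1. Let R = k[t₁,…,t_d] and S = k[x₁,…,x_d] be polynomial rings. Let V be a k-vector space equipped with d pairwise commuting, locally nilpotent k-linear endomorphisms N₁,…,N_d (locally nilpotent means: for every v ∈ V and every i there is m with N_i^m(v) = 0). Make V ⊗_k R into an S-module via the k-algebra homomorphism S → End_k(V ⊗_k R) sending x_i to N_i ⊗ id + id ⊗ ∂/∂t_i (these endomorphisms pairwise commute). Then V ⊗_k R is an injective S-module. -/
open scoped TensorProduct

/-!
Call a representation of `S` cofree on `V` if it is the `J`-power torsion part of `Hom_k(S, V)`,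
with `J` the ideal generated by the variables. A map from an ideal of `S` to such a module kills the
elements lying in a high power of `J`, by Artin–Rees; followed by evaluation at `1` it therefore
extends to a functional on `S` that still kills a power of `J`, and this gives Baer's criterion.

Taylor coefficients show that `V ⊗ R` with the action of the `∂/∂t_i` alone is cofree. The diagonal
action is conjugate to it by `exp(∑ t_i N_i)`. No series is needed: the universal property of the
cofree module provides the maps `exp(± ∑ t_i N_i)`, and its uniqueness part shows that they are
mutually inverse.
-/

open MvPolynomial (X monomial pderiv)

section ArtinRees

variable {S M P : Type*} [CommRing S] [AddCommGroup M] [Module S M] [AddCommGroup P] [Module S P]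

theorem exists_pow_le_annihilator_of_fg {J : Ideal S} {Q : Submodule S M} (hQ : Q.FG)
    (htors : ∀ x : M, ∃ n : ℕ, ∀ s ∈ J ^ n, s • x = 0) : ∃ n : ℕ, J ^ n ≤ Q.annihilator := by
  obtain ⟨T, rfl⟩ := hQ
  choose n hn using htors
  refine ⟨T.sup n, fun s hs => (Submodule.mem_annihilator_span _ _).2 fun t => ?_⟩
  exact hn t s (Ideal.pow_le_pow_right (Finset.le_sup t.2) hs)

theorem exists_pow_smul_top_map_eq_zero [IsNoetherianRing S] [Module.Finite S P] {J : Ideal S}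
    {Q : Submodule S P} (g : Q →ₗ[S] M) (htors : ∀ x : M, ∃ n : ℕ, ∀ s ∈ J ^ n, s • x = 0) :
    ∃ n : ℕ, ∀ q : Q, (q : P) ∈ J ^ n • (⊤ : Submodule S P) → g q = 0 := by
  obtain ⟨n, hn⟩ := exists_pow_le_annihilator_of_fg (Submodule.FG.map g Module.Finite.fg_top) htors
  obtain ⟨c, hc⟩ := Ideal.exists_pow_inf_eq_pow_smul J Q
  refine ⟨n + c, fun q hq => ?_⟩
  have hq_smul : (q : P) ∈ J ^ n • Q := by
    have hq_inf : (q : P) ∈ J ^ (n + c) • (⊤ : Submodule S P) ⊓ Q := ⟨hq, q.2⟩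
    rw [hc _ le_add_self, Nat.add_sub_cancel] at hq_inf
    exact Submodule.smul_mono le_rfl inf_le_right hq_inf
  have hgq : g q ∈ (J ^ n • (⊤ : Submodule S Q)).map g :=
    Submodule.mem_map_of_mem ((Submodule.mem_smul_top_iff _ _ _).2 hq_smul)
  rwa [Submodule.map_smul'', Submodule.le_annihilator_iff.1 hn, Submodule.mem_bot] at hgq

end ArtinRees

theorem exists_extend_of_eq_zero_on_inf {k E V : Type*} [Field k] [AddCommGroup E] [Module k E]
    [AddCommGroup V] [Module k V] {p q : Submodule k E} (f : p →ₗ[k] V)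
    (hf : ∀ x : p, (x : E) ∈ q → f x = 0) :
    ∃ g : E →ₗ[k] V, (∀ x : p, g x = f x) ∧ ∀ x ∈ q, g x = 0 := by
  let fp : E →ₗ.[k] V := ⟨p, f⟩
  let zq : E →ₗ.[k] V := ⟨q, 0⟩
  have hagree : ∀ (x : fp.domain) (y : zq.domain), (x : E) = y → fp x = zq y :=
    fun x y hxy => hf x (hxy ▸ y.2)
  obtain ⟨g, hg⟩ := (fp.sup zq hagree).toFun.exists_extend
  refine ⟨g, fun x => ?_, fun x hx => ?_⟩
  · exact (LinearMap.congr_fun hg ⟨x, Submodule.mem_sup_left x.2⟩).trans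
      ((fp.left_le_sup zq hagree).2 (x := x) rfl).symm
  · exact (LinearMap.congr_fun hg ⟨x, Submodule.mem_sup_right hx⟩).trans
      ((fp.right_le_sup zq hagree).2 (x := ⟨x, hx⟩) rfl).symm

section LocallyNilpotent

/-- Every vector is annihilated by some power of `f`. -/
def IsLocallyNilpotent {R M : Type*} [Semiring R] [AddCommMonoid M] [Module R M]
    (f : Module.End R M) : Prop :=
  ∀ m : M, ∃ n : ℕ, (f ^ n) m = 0

namespace IsLocallyNilpotent

variable {R M : Type*} [CommSemiring R] [AddCommMonoid M] [Module R M] {f g : Module.End R M}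

theorem add (hf : IsLocallyNilpotent f) (hg : IsLocallyNilpotent g) (hfg : Commute f g) :
    IsLocallyNilpotent (f + g) := fun m => by
  obtain ⟨a, ha⟩ := hf m
  obtain ⟨b, hb⟩ := hg m
  refine ⟨a + b, ?_⟩
  rw [hfg.add_pow', LinearMap.sum_apply]
  refine Finset.sum_eq_zero fun ⟨i, j⟩ hij => ?_
  rw [Finset.HasAntidiagonal.mem_antidiagonal] at hij
  have hterm : (f ^ i * g ^ j) m = 0 := by
    obtain hi | hj : a ≤ i ∨ b ≤ j := by lia
    · rw [(hfg.pow_pow i j).eq, Module.End.mul_apply, Module.End.pow_map_zero_of_le hi ha, map_zero]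
    · rw [Module.End.mul_apply, Module.End.pow_map_zero_of_le hj hb, map_zero]
  rw [LinearMap.smul_apply, hterm, smul_zero]

theorem rTensor (hf : IsLocallyNilpotent f) (Q : Type*) [AddCommMonoid Q] [Module R Q] :
    IsLocallyNilpotent (f.rTensor Q) := fun m => by
  induction m with
  | zero => exact ⟨0, map_zero _⟩
  | tmul v q =>
    obtain ⟨n, hn⟩ := hf v
    exact ⟨n, by rw [LinearMap.rTensor_pow, LinearMap.rTensor_tmul, hn, TensorProduct.zero_tmul]⟩
  | add x y hx hy =>
    obtain ⟨a, ha⟩ := hx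
    obtain ⟨b, hb⟩ := hy
    refine ⟨max a b, ?_⟩
    rw [map_add, Module.End.pow_map_zero_of_le (le_max_left a b) ha,
      Module.End.pow_map_zero_of_le (le_max_right a b) hb, add_zero]

theorem neg {R M : Type*} [Ring R] [AddCommGroup M] [Module R M] {f : Module.End R M}
    (hf : IsLocallyNilpotent f) : IsLocallyNilpotent (-f) := fun m => by
  obtain ⟨n, hn⟩ := hf m
  exact ⟨n, by rw [neg_pow, Module.End.mul_apply, hn, map_zero]⟩

end IsLocallyNilpotent

end LocallyNilpotent

section TensorCommute

variable {R V Q : Type*} [CommSemiring R] [AddCommMonoid V] [Module R V] [AddCommMonoid Q]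
  [Module R Q]

theorem commute_rTensor_lTensor (f : Module.End R V) (g : Module.End R Q) :
    Commute (f.rTensor Q) (g.lTensor V) :=
  (LinearMap.rTensor_comp_lTensor ..).trans (LinearMap.lTensor_comp_rTensor ..).symm

theorem commute_rTensor {f g : Module.End R V} (h : Commute f g) :
    Commute (f.rTensor Q) (g.rTensor Q) := by
  rw [commute_iff_eq, ← LinearMap.rTensor_mul, h.eq, LinearMap.rTensor_mul]

theorem commute_lTensor {f g : Module.End R Q} (h : Commute f g) :
    Commute (f.lTensor V) (g.lTensor V) := by
  rw [commute_iff_eq, ← LinearMap.lTensor_mul, h.eq, LinearMap.lTensor_mul]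

end TensorCommute

section Representation

variable {k S V E F M : Type*} [CommRing k] [CommRing S] [Algebra k S]
  [AddCommGroup V] [Module k V] [AddCommGroup E] [Module k E] [AddCommGroup F] [Module k F]
  [AddCommGroup M] [Module k M]

/-- Every vector of the representation `φ` of `S` is annihilated by a power of the ideal `J`. -/
def IsPowTorsion (J : Ideal S) (φ : S →ₐ[k] Module.End k M) : Prop :=
  ∀ m : M, ∃ n : ℕ, ∀ s ∈ J ^ n, φ s m = 0

/-- `T` is a morphism of representations of `S`. Representations are algebra homomorphisms rather
than `S`-modules because one space carries several of them below. -/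
def Intertwines (ρ : S →ₐ[k] Module.End k E) (φ : S →ₐ[k] Module.End k M) (T : E →ₗ[k] M) : Prop :=
  ∀ s e, T (ρ s e) = φ s (T e)

theorem Intertwines.comp {ρ : S →ₐ[k] Module.End k E} {τ : S →ₐ[k] Module.End k F}
    {φ : S →ₐ[k] Module.End k M} {T' : F →ₗ[k] M} {T : E →ₗ[k] F} (hT' : Intertwines τ φ T')
    (hT : Intertwines ρ τ T) : Intertwines ρ φ (T' ∘ₗ T) := fun s e => by
  rw [LinearMap.comp_apply, hT, hT', LinearMap.comp_apply]

theorem intertwines_id (φ : S →ₐ[k] Module.End k M) : Intertwines φ φ .id := fun _ _ => rfl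

/-- The functional `ev` exhibits `φ` as the cofree `J`-power torsion representation on `V`: via
`m ↦ (s ↦ ev (φ s m))` it is the `J`-power torsion part of the coinduced module `Hom_k(S, V)`. -/
structure IsCofree (J : Ideal S) (φ : S →ₐ[k] Module.End k M) (ev : M →ₗ[k] V) : Prop where
  isPowTorsion : IsPowTorsion J φ
  eq_zero : ∀ m : M, (∀ s, ev (φ s m) = 0) → m = 0
  exists_eq : ∀ (n : ℕ) (f : S →ₗ[k] V), (∀ s ∈ J ^ n, f s = 0) → ∃ m : M, ∀ s, ev (φ s m) = f s

namespace IsCofree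

variable {J : Ideal S} {φ : S →ₐ[k] Module.End k M} {ev : M →ₗ[k] V}
  {ρ : S →ₐ[k] Module.End k E}

theorem ext (h : IsCofree J φ ev) {m m' : M} (hm : ∀ s, ev (φ s m) = ev (φ s m')) : m = m' :=
  sub_eq_zero.1 (h.eq_zero _ fun s => by rw [map_sub, map_sub, hm, sub_self])

theorem hom_ext (h : IsCofree J φ ev) {T T' : E →ₗ[k] M} (hT : Intertwines ρ φ T)
    (hT' : Intertwines ρ φ T') (hev : ∀ e, ev (T e) = ev (T' e)) : T = T' :=
  LinearMap.ext fun e => h.ext fun s => by rw [← hT, ← hT', hev]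

theorem exists_lift (h : IsCofree J φ ev) (hρ : IsPowTorsion J ρ) (ε : E →ₗ[k] V) :
    ∃ T : E →ₗ[k] M, Intertwines ρ φ T ∧ ∀ e, ev (T e) = ε e := by
  have hex : ∀ e, ∃ m, ∀ s, ev (φ s m) = ε (ρ s e) := fun e => by
    obtain ⟨n, hn⟩ := hρ e
    exact h.exists_eq n (ε ∘ₗ LinearMap.applyₗ e ∘ₗ ρ.toLinearMap) fun s hs => by simp [hn s hs]
  choose T hT using hex
  refine ⟨{ toFun := T, map_add' := fun x y => h.ext fun s => ?_,
            map_smul' := fun c x => h.ext fun s => ?_ }, fun s e => h.ext fun r => ?_, fun e => ?_⟩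
  · simp [hT]
  · simp [hT]
  · simp [hT, ← Module.End.mul_apply, ← map_mul]
  · simpa using hT e 1

theorem of_equiv (h : IsCofree J φ ev) {ε : E →ₗ[k] V} (T : E ≃ₗ[k] M)
    (hT : Intertwines ρ φ T.toLinearMap) (hev : ∀ e, ev (T e) = ε e) : IsCofree J ρ ε where
  isPowTorsion e := (h.isPowTorsion (T e)).imp fun n hn s hs =>
    T.map_eq_zero_iff.1 ((hT s e).trans (hn s hs))
  eq_zero e he := T.map_eq_zero_iff.1 <| h.eq_zero _ fun s =>
    (congrArg ev (hT s e)).symm.trans ((hev _).trans (he s))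
  exists_eq n f hf := by
    obtain ⟨m, hm⟩ := h.exists_eq n f hf
    refine ⟨T.symm m, fun s => ?_⟩
    calc ε (ρ s (T.symm m)) = ev (φ s (T (T.symm m))) := by rw [← hev]; exact congrArg ev (hT s _)
      _ = f s := by rw [T.apply_symm_apply, hm]

end IsCofree

theorem isPowTorsion_span_of_finite {t : Set S} (ht : t.Finite) (φ : S →ₐ[k] Module.End k M)
    (hnil : ∀ s ∈ t, IsLocallyNilpotent (φ s)) : IsPowTorsion (Ideal.span t) φ := by
  intro m
  let : Module S M := Module.compHom M φ.toRingHom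
  have hrad : Ideal.span t ≤ (Ideal.torsionOf S M m).radical :=
    Ideal.span_le.2 fun s hs => (hnil s hs m).imp fun n hn => by
      rw [Ideal.mem_torsionOf_iff]
      rwa [← map_pow] at hn
  exact Ideal.exists_pow_le_of_le_radical_of_fg hrad (Submodule.fg_span ht)

end Representation

theorem IsCofree.baer {k S V M : Type*} [Field k] [CommRing S] [IsNoetherianRing S] [Algebra k S]
    [AddCommGroup V] [Module k V] [AddCommGroup M] [Module k M] {J : Ideal S}
    {φ : S →ₐ[k] Module.End k M} {ev : M →ₗ[k] V} (h : IsCofree J φ ev) :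
    @Module.Baer S _ M _ (Module.compHom M φ.toRingHom) := by
  let : Module S M := Module.compHom M φ.toRingHom
  have : IsScalarTower k S M := ⟨fun c s m => LinearMap.congr_fun (map_smul φ c s) m⟩
  intro I g
  obtain ⟨n, hn⟩ := exists_pow_smul_top_map_eq_zero g h.isPowTorsion
  obtain ⟨f, hfI, hfJ⟩ := exists_extend_of_eq_zero_on_inf (p := I.restrictScalars k)
    (q := (J ^ n).restrictScalars k) (ev ∘ₗ g.restrictScalars k)
    fun a ha => by
      have := hn a (by simpa using ha)
      exact (congrArg ev this).trans (map_zero ev)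
  obtain ⟨m, hm⟩ := h.exists_eq n f hfJ
  refine ⟨LinearMap.toSpanSingleton S M m, fun a ha => h.ext fun s => ?_⟩
  calc ev (s • a • m) = f (s * a) := by rw [smul_smul]; exact hm _
    _ = ev (g (s • ⟨a, ha⟩)) := hfI ⟨s * a, I.mul_mem_left s ha⟩
    _ = ev (s • g ⟨a, ha⟩) := by rw [map_smul]

section PolynomialRepresentation

variable {k σ A E M : Type*} [CommRing k] [Ring A] [Algebra k A] [AddCommGroup E] [Module k E]
  [AddCommGroup M] [Module k M]

open scoped IsMulCommutative in
theorem exists_algHom_X_eq_of_commute (a : σ → A) (ha : ∀ i j, Commute (a i) (a j)) :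
    ∃ φ : MvPolynomial σ k →ₐ[k] A, ∀ i, φ (X i) = a i := by
  have : IsMulCommutative (Algebra.adjoin k (Set.range a)) := by
    refine Algebra.isMulCommutative_adjoin k ?_
    rintro _ ⟨i, rfl⟩ _ ⟨j, rfl⟩
    exact ha i j
  let b (i : σ) : Algebra.adjoin k (Set.range a) := ⟨a i, Algebra.subset_adjoin ⟨i, rfl⟩⟩
  exact ⟨(Algebra.adjoin k (Set.range a)).val.comp (MvPolynomial.aeval b), fun i => by simp [b]⟩

theorem intertwines_of_X {ρ : MvPolynomial σ k →ₐ[k] Module.End k E}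
    {φ : MvPolynomial σ k →ₐ[k] Module.End k M} {T : E →ₗ[k] M}
    (hX : ∀ i e, T (ρ (X i) e) = φ (X i) (T e)) : Intertwines ρ φ T := by
  intro s
  induction s using MvPolynomial.induction_on with
  | C c => intro e; simp [← MvPolynomial.algebraMap_eq, Module.algebraMap_end_apply]
  | add p q hp hq => intro e; simp [hp, hq]
  | mul_X p i hp => intro e; simp [hp, hX]

end PolynomialRepresentation

section DiagonalAction

variable {k σ V : Type*} [CommRing k] [AddCommGroup V] [Module k V]

theorem commute_pderiv (i j : σ) :
    Commute (pderiv (R := k) i).toLinearMap (pderiv j).toLinearMap := by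
  classical
  have hbracket : ⁅pderiv (R := k) i, pderiv (R := k) j⁆ = 0 :=
    MvPolynomial.derivation_ext fun l => by
      simp [Derivation.commutator_apply, MvPolynomial.pderiv_X, Pi.single_apply, apply_ite]
  exact LinearMap.ext fun p => sub_eq_zero.1 (DFunLike.congr_fun hbracket p)

/-- The diagonal action of the `i`-th variable on `V ⊗ R`. -/
noncomputable def diagonalAction (N : σ → Module.End k V) (i : σ) :
    Module.End k (V ⊗[k] MvPolynomial σ k) :=
  (N i).rTensor (MvPolynomial σ k) + LinearMap.lTensor V (pderiv i).toLinearMap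

variable {N : σ → Module.End k V}

theorem commute_rTensor_diagonalAction (hN : ∀ i j, Commute (N i) (N j)) (i j : σ) :
    Commute ((N i).rTensor (MvPolynomial σ k)) (diagonalAction N j) :=
  (commute_rTensor (hN i j)).add_right (commute_rTensor_lTensor _ _)

theorem commute_diagonalAction (hN : ∀ i j, Commute (N i) (N j)) (i j : σ) :
    Commute (diagonalAction N i) (diagonalAction N j) :=
  (commute_rTensor_diagonalAction hN i j).add_left <|
    (commute_rTensor_lTensor _ _).symm.add_right (commute_lTensor (commute_pderiv i j))

end DiagonalAction

section DividedPowers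

theorem prod_factorial_add_single {σ : Type*} (a : σ →₀ ℕ) (i : σ) :
    ((a + Finsupp.single i 1).prod fun _ n => n.factorial) =
      (a i + 1) * a.prod fun _ n => n.factorial := by
  classical
  have hzero : ∀ _ : σ, (0 : ℕ).factorial = 1 := fun _ => rfl
  rw [← Finsupp.mul_prod_erase' _ i _ hzero, ← Finsupp.mul_prod_erase' a i _ hzero,
    Finsupp.erase_add, Finsupp.erase_single, add_zero, Finsupp.add_apply, Finsupp.single_eq_same,
    Nat.factorial_succ, mul_assoc]

variable (k σ : Type*) [Field k] [CharZero k]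

/-- The basis of divided powers `t ^ a / a!`, on which `∂/∂t_i` acts by lowering exponents. -/
noncomputable def dividedPowerBasis : Module.Basis (σ →₀ ℕ) k (MvPolynomial σ k) :=
  (MvPolynomial.basisMonomials σ k).unitsSMul fun a =>
    (Units.mk0 ((a.prod fun _ n => n.factorial : ℕ) : k) <| Nat.cast_ne_zero.2 <|
      Finset.prod_ne_zero_iff.2 fun i _ => (a i).factorial_ne_zero)⁻¹

variable {k σ}

theorem dividedPowerBasis_repr_apply (p : MvPolynomial σ k) (a : σ →₀ ℕ) :
    (dividedPowerBasis k σ).repr p a = (a.prod fun _ n => n.factorial : ℕ) * p.coeff a := by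
  rw [dividedPowerBasis, Module.Basis.repr_unitsSMul, inv_inv]
  rfl

theorem dividedPowerBasis_repr_pderiv (i : σ) (p : MvPolynomial σ k) (a : σ →₀ ℕ) :
    (dividedPowerBasis k σ).repr (pderiv i p) a =
      (dividedPowerBasis k σ).repr p (a + Finsupp.single i 1) := by
  rw [dividedPowerBasis_repr_apply, dividedPowerBasis_repr_apply, MvPolynomial.coeff_pderiv,
    prod_factorial_add_single]
  push_cast
  ring

end DividedPowers

section Taylor

variable {k σ V : Type*} [Field k] [CharZero k] [AddCommGroup V] [Module k V]

open scoped Classical in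
/-- The Taylor coefficients at the origin of a `V`-valued polynomial: `∑ v_a ⊗ t ^ a / a!` has
coefficients `v_a`. -/
noncomputable def taylorEquiv : V ⊗[k] MvPolynomial σ k ≃ₗ[k] ((σ →₀ ℕ) →₀ V) :=
  TensorProduct.equivFinsuppOfBasisRight (dividedPowerBasis k σ)

/-- The value at the origin of a `V`-valued polynomial. -/
noncomputable def evalZero : V ⊗[k] MvPolynomial σ k →ₗ[k] V :=
  Finsupp.lapply 0 ∘ₗ taylorEquiv.toLinearMap

theorem taylorEquiv_rTensor (f : Module.End k V) (m : V ⊗[k] MvPolynomial σ k) (a : σ →₀ ℕ) :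
    taylorEquiv (f.rTensor _ m) a = f (taylorEquiv m a) := by
  induction m with
  | zero => simp
  | tmul v p => simp [taylorEquiv]
  | add x y hx hy => simp [hx, hy]

theorem evalZero_rTensor (f : Module.End k V) (m : V ⊗[k] MvPolynomial σ k) :
    evalZero (f.rTensor _ m) = f (evalZero m) :=
  taylorEquiv_rTensor f m 0

theorem taylorEquiv_lTensor_pderiv (i : σ) (m : V ⊗[k] MvPolynomial σ k) (a : σ →₀ ℕ) :
    taylorEquiv ((pderiv i).toLinearMap.lTensor V m) a =
      taylorEquiv m (a + Finsupp.single i 1) := by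
  induction m with
  | zero => simp
  | tmul v p => simp [taylorEquiv, dividedPowerBasis_repr_pderiv]
  | add x y hx hy => simp [hx, hy]

theorem taylorEquiv_lTensor_pderiv_pow (i : σ) (n : ℕ) (m : V ⊗[k] MvPolynomial σ k)
    (a : σ →₀ ℕ) : taylorEquiv (((pderiv i).toLinearMap.lTensor V ^ n) m) a =
      taylorEquiv m (a + Finsupp.single i n) := by
  induction n generalizing a with
  | zero => simp
  | succ n ih =>
    rw [pow_succ', Module.End.mul_apply, taylorEquiv_lTensor_pderiv, ih, add_assoc,
      ← Finsupp.single_add, add_comm 1 n]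

theorem isLocallyNilpotent_lTensor_pderiv (i : σ) :
    IsLocallyNilpotent (LinearMap.lTensor V (pderiv (R := k) i).toLinearMap) := fun m => by
  refine ⟨(taylorEquiv m).support.sup (· i) + 1, taylorEquiv.map_eq_zero_iff.1 ?_⟩
  ext a
  rw [taylorEquiv_lTensor_pderiv_pow, Finsupp.zero_apply, ← Finsupp.notMem_support_iff]
  intro ha
  have hle := Finset.le_sup (f := (· i)) ha
  simp only [Finsupp.add_apply, Finsupp.single_eq_same] at hle
  lia

section Derivative

variable {D : MvPolynomial σ k →ₐ[k] Module.End k (V ⊗[k] MvPolynomial σ k)}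

theorem taylorEquiv_monomial (hD : ∀ i, D (X i) = LinearMap.lTensor V (pderiv i).toLinearMap)
    (b : σ →₀ ℕ) (m : V ⊗[k] MvPolynomial σ k) (a : σ →₀ ℕ) :
    taylorEquiv (D (monomial b 1) m) a = taylorEquiv m (a + b) := by
  induction b using Finsupp.induction_linear generalizing m a with
  | zero => simp
  | add b c hb hc =>
    rw [← one_mul (1 : k), ← MvPolynomial.monomial_mul, map_mul, Module.End.mul_apply, hb, hc,
      add_assoc]
  | single i n =>
    rw [← MvPolynomial.X_pow_eq_monomial, map_pow, hD, taylorEquiv_lTensor_pderiv_pow]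

theorem evalZero_monomial (hD : ∀ i, D (X i) = LinearMap.lTensor V (pderiv i).toLinearMap)
    (a : σ →₀ ℕ) (m : V ⊗[k] MvPolynomial σ k) :
    evalZero (D (monomial a 1) m) = taylorEquiv m a := by
  simpa [evalZero] using taylorEquiv_monomial hD a m 0

theorem isCofree_derivative [Finite σ]
    (hD : ∀ i, D (X i) = LinearMap.lTensor V (pderiv i).toLinearMap) :
    IsCofree (MvPolynomial.idealOfVars σ k) D evalZero where
  isPowTorsion := isPowTorsion_span_of_finite (Set.finite_range X) D <| by
    rintro _ ⟨i, rfl⟩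
    exact hD i ▸ isLocallyNilpotent_lTensor_pderiv i
  eq_zero m hm := taylorEquiv.map_eq_zero_iff.1 <| Finsupp.ext fun a => by
    rw [← evalZero_monomial hD, hm, Finsupp.zero_apply]
  exists_eq n f hf := by
    have hfin : (Function.support fun a => f (monomial a 1)).Finite := by
      refine (Finsupp.finite_of_degree_le n).subset fun a ha => ?_
      contrapose! ha
      have hmem : monomial a (1 : k) ∈ MvPolynomial.idealOfVars σ k ^ n :=
        (MvPolynomial.monomial_mem_pow_idealOfVars_iff n a one_ne_zero).2 (not_le.1 ha).le
      exact Function.notMem_support.2 (hf _ hmem)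
    refine ⟨taylorEquiv.symm (Finsupp.ofSupportFinite _ hfin), fun s => ?_⟩
    refine LinearMap.congr_fun (f := evalZero ∘ₗ LinearMap.applyₗ _ ∘ₗ D.toLinearMap) (g := f)
      ((MvPolynomial.basisMonomials σ k).ext fun a => ?_) s
    simp [evalZero_monomial hD, Finsupp.ofSupportFinite_coe]

end Derivative

section Diagonal

variable {N : σ → Module.End k V}

theorem isLocallyNilpotent_diagonalAction {i : σ} (hN : IsLocallyNilpotent (N i)) :
    IsLocallyNilpotent (diagonalAction N i) :=
  (hN.rTensor _).add (isLocallyNilpotent_lTensor_pderiv i) (commute_rTensor_lTensor _ _)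

variable {D φ ψ : MvPolynomial σ k →ₐ[k] Module.End k (V ⊗[k] MvPolynomial σ k)}
  {T T' : Module.End k (V ⊗[k] MvPolynomial σ k)}

theorem commute_rTensor_of_intertwines [Finite σ] (hN : ∀ i j, Commute (N i) (N j))
    (hD : ∀ i, D (X i) = LinearMap.lTensor V (pderiv i).toLinearMap)
    (hφ : ∀ i, φ (X i) = diagonalAction N i) (hT : Intertwines φ D T)
    (hT0 : ∀ m, evalZero (T m) = evalZero m) (i : σ) :
    Commute T ((N i).rTensor (MvPolynomial σ k)) := by
  have hNφ : Intertwines φ φ ((N i).rTensor (MvPolynomial σ k)) := intertwines_of_X fun j m => by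
    rw [hφ]
    exact LinearMap.congr_fun (commute_rTensor_diagonalAction hN i j).eq m
  have hND : Intertwines D D ((N i).rTensor (MvPolynomial σ k)) := intertwines_of_X fun j m => by
    rw [hD]
    exact LinearMap.congr_fun (commute_rTensor_lTensor _ _).eq m
  refine (isCofree_derivative hD).hom_ext (hT.comp hNφ) (hND.comp hT) fun m => ?_
  change evalZero (T ((N i).rTensor _ m)) = evalZero ((N i).rTensor _ (T m))
  rw [hT0, evalZero_rTensor, evalZero_rTensor, hT0]

theorem comp_eq_id_of_intertwines [Finite σ] (hN : ∀ i j, Commute (N i) (N j))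
    (hD : ∀ i, D (X i) = LinearMap.lTensor V (pderiv i).toLinearMap)
    (hφ : ∀ i, φ (X i) = diagonalAction N i) (hψ : ∀ i, ψ (X i) = diagonalAction (-N) i)
    (hT : Intertwines φ D T) (hT0 : ∀ m, evalZero (T m) = evalZero m)
    (hT' : Intertwines ψ D T') (hT'0 : ∀ m, evalZero (T' m) = evalZero m) :
    T' ∘ₗ T = LinearMap.id := by
  have hDψ : Intertwines D ψ T := intertwines_of_X fun i m => by
    have hTN := LinearMap.congr_fun (commute_rTensor_of_intertwines hN hD hφ hT hT0 i).eq m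
    have hTφ := hT (X i) m
    simp only [hφ, hD, diagonalAction, LinearMap.add_apply, map_add, Module.End.mul_apply]
      at hTN hTφ
    simp only [hD, hψ, diagonalAction, Pi.neg_apply, LinearMap.rTensor_neg, LinearMap.add_apply,
      LinearMap.neg_apply, ← hTN, ← hTφ, neg_add_cancel_left]
  exact (isCofree_derivative hD).hom_ext (hT'.comp hDψ) (intertwines_id D) fun m => by
    rw [LinearMap.comp_apply, hT'0, hT0, LinearMap.id_apply]

theorem isPowTorsion_diagonal [Finite σ] (hnil : ∀ i, IsLocallyNilpotent (N i))
    (hφ : ∀ i, φ (X i) = diagonalAction N i) : IsPowTorsion (MvPolynomial.idealOfVars σ k) φ :=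
  isPowTorsion_span_of_finite (Set.finite_range X) φ <| by
    rintro _ ⟨i, rfl⟩
    exact hφ i ▸ isLocallyNilpotent_diagonalAction (hnil i)

theorem isCofree_diagonal [Finite σ] (hN : ∀ i j, Commute (N i) (N j))
    (hnil : ∀ i, IsLocallyNilpotent (N i)) (hφ : ∀ i, φ (X i) = diagonalAction N i) :
    IsCofree (MvPolynomial.idealOfVars σ k) φ evalZero := by
  obtain ⟨D, hD⟩ := exists_algHom_X_eq_of_commute (k := k)
    (fun i : σ => (pderiv (R := k) i).toLinearMap.lTensor V)
    fun i j => commute_lTensor (commute_pderiv i j)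
  have hN' : ∀ i j, Commute ((-N) i) ((-N) j) := fun i j => (hN i j).neg_left.neg_right
  obtain ⟨ψ, hψ⟩ := exists_algHom_X_eq_of_commute (k := k) (diagonalAction (-N))
    (commute_diagonalAction hN')
  have hcofree := isCofree_derivative hD
  obtain ⟨T, hT, hT0⟩ := hcofree.exists_lift (isPowTorsion_diagonal hnil hφ) evalZero
  obtain ⟨T', hT', hT'0⟩ :=
    hcofree.exists_lift (isPowTorsion_diagonal (fun i => (hnil i).neg) hψ) evalZero
  have hT'T := comp_eq_id_of_intertwines hN hD hφ hψ hT hT0 hT' hT'0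
  have hTT' := comp_eq_id_of_intertwines hN' hD hψ (by rwa [neg_neg]) hT' hT'0 hT hT0
  exact hcofree.of_equiv (LinearEquiv.ofLinearMap T T' hTT' hT'T) hT hT0

end Diagonal

end Taylor

/-- Let `V` be a `k`-vector space with `d` pairwise commuting locally nilpotent
endomorphisms `N₁,…,N_d`, and let `S = k[x₁,…,x_d]` act on `V ⊗ₖ R`
(`R = k[t₁,…,t_d]`) via `x_i ↦ N_i ⊗ id + id ⊗ ∂/∂t_i`. Then `V ⊗ₖ R` is an
injective `S`-module. -/
theorem stmt4 (k : Type) [Field k] [CharZero k] (d : ℕ) (hd : 1 ≤ d)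
    (V : Type) [AddCommGroup V] [Module k V]
    (N : Fin d → Module.End k V)
    (hcomm : ∀ i j : Fin d, Commute (N i) (N j))
    (hnil : ∀ (i : Fin d) (v : V), ∃ m : ℕ, (N i ^ m) v = 0)
    (φ : MvPolynomial (Fin d) k →ₐ[k]
      Module.End k (V ⊗[k] MvPolynomial (Fin d) k))
    (hφ : ∀ i : Fin d, φ (MvPolynomial.X i) =
      LinearMap.rTensor (MvPolynomial (Fin d) k) (N i) +
        LinearMap.lTensor V (MvPolynomial.pderiv i).toLinearMap) :
    @Module.Injective (MvPolynomial (Fin d) k) _ (V ⊗[k] MvPolynomial (Fin d) k) _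
      (Module.compHom _ φ.toRingHom) := by
  have hcofree : IsCofree (MvPolynomial.idealOfVars (Fin d) k) φ evalZero :=
    isCofree_diagonal hcomm hnil hφ
  exact @Module.Baer.injective _ _ _ _ (Module.compHom _ φ.toRingHom) hcofree.baer
end

section
/- Let k be a field of characteristic zero and V a k-vector space. Let T(V) be the free (tensor) associative algebra on V, and let Δ : T(V) → T(V) ⊗_k T(V) be the unique k-algebra homomorphism with Δ(v) = v ⊗ 1 + 1 ⊗ v for all v ∈ V. Then the set of primitive elements of T(V), i.e. {a ∈ T(V) : Δ(a) = a ⊗ 1 + 1 ⊗ a}, equals the image of the canonical Lie algebra homomorphism from the free Lie algebra L(V) on V into T(V) (where T(V) is regarded as a Lie algebra under the commutator bracket and the map extends the inclusion of V). -/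
open scoped TensorProduct

attribute [local instance 100] LieRing.ofAssociativeRing

/-!
Let `ε` be the augmentation of `T(V)` and let `D` be the Dynkin operator, the linear endomorphism
with `D 1 = 0` and `D (v x) = v ε(x) + [v, D x]`; on words of positive length it is right-normed
bracketing, so its values are Lie elements. If `⋆` denotes convolution with respect to `Δ`, then
induction on the degree gives `D ⋆ id = n` on tensors of degree `n`: the terms `D(x₁) v x₂` cancel.
On a primitive element `D ⋆ id` agrees with `D`. As both maps preserve the degree, a homogeneous
component `aₙ` of a primitive `a` satisfies `D aₙ = n aₙ`, which is a Lie element; dividing by `n`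
shows that `aₙ` is a Lie element for `n > 0`, while `a₀ = ε(a) = 0`. The converse holds because
primitive elements are closed under the commutator.
-/

namespace Friedrichs

section FreeLieAlgebra

variable {R X L : Type*} [CommRing R] [LieRing L] [LieAlgebra R L]

theorem range_freeLieAlgebra_lift (f : X → L) :
    (FreeLieAlgebra.lift R f).range = LieSubalgebra.lieSpan R L (Set.range f) := by
  apply le_antisymm
  · let toSpan : FreeLieAlgebra R X →ₗ⁅R⁆ LieSubalgebra.lieSpan R L (Set.range f) :=
      FreeLieAlgebra.lift R fun x => ⟨f x, LieSubalgebra.subset_lieSpan ⟨x, rfl⟩⟩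
    have lift_factors : FreeLieAlgebra.lift R f =
        (LieSubalgebra.lieSpan R L (Set.range f)).incl.comp toSpan :=
      FreeLieAlgebra.hom_ext fun x => by simp [toSpan]
    rintro _ ⟨x, rfl⟩
    rw [lift_factors]
    exact (toSpan x).2
  · rw [LieSubalgebra.lieSpan_le]
    rintro _ ⟨x, rfl⟩
    exact ⟨FreeLieAlgebra.of R x, FreeLieAlgebra.lift_of_apply f x⟩

end FreeLieAlgebra

section Decomposition

variable {ι R M : Type*} [DecidableEq ι] [Semiring R] [AddCommMonoid M] [Module R M]
  (ℳ : ι → Submodule R M) [DirectSum.Decomposition ℳ]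

theorem coe_decompose_apply_of_forall_mem {f : M →ₗ[R] M} (hf : ∀ i, ∀ x ∈ ℳ i, f x ∈ ℳ i)
    (x : M) (i : ι) :
    (DirectSum.decompose ℳ (f x) i : M) = f (DirectSum.decompose ℳ x i) := by
  induction x using DirectSum.Decomposition.inductionOn ℳ with
  | zero => simp
  | @homogeneous j x =>
    obtain rfl | hij := eq_or_ne j i
    · rw [DirectSum.decompose_of_mem_same ℳ (hf j x x.2), DirectSum.decompose_of_mem_same ℳ x.2]
    · rw [DirectSum.decompose_of_mem_ne ℳ (hf j x x.2) hij,
        DirectSum.decompose_of_mem_ne ℳ x.2 hij, map_zero]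
  | add x y hx hy => simp [DirectSum.decompose_add, hx, hy]

theorem apply_decompose_eq_of_apply_eq {f g : M →ₗ[R] M} (hf : ∀ i, ∀ x ∈ ℳ i, f x ∈ ℳ i)
    (hg : ∀ i, ∀ x ∈ ℳ i, g x ∈ ℳ i) {x : M} (hfg : f x = g x) (i : ι) :
    f (DirectSum.decompose ℳ x i) = g (DirectSum.decompose ℳ x i) := by
  rw [← coe_decompose_apply_of_forall_mem ℳ hf, ← coe_decompose_apply_of_forall_mem ℳ hg, hfg]

end Decomposition

section Primitives

variable {k A : Type*} [CommRing k] [Ring A] [Algebra k A] (Δ : A →ₐ[k] A ⊗[k] A)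

/-- The Lie algebra of elements of `A` that are primitive for `Δ`. No coassociativity or counit
is required of `Δ`. -/
def primitives : LieSubalgebra k A where
  carrier := {a | Δ a = a ⊗ₜ[k] 1 + 1 ⊗ₜ[k] a}
  zero_mem' := by simp
  add_mem' {a b} (ha : Δ a = _) (hb : Δ b = _) := by
    rw [Set.mem_ofPred_eq, map_add, ha, hb, TensorProduct.add_tmul, TensorProduct.tmul_add]
    abel
  smul_mem' c a (ha : Δ a = _) := by
    rw [Set.mem_ofPred_eq, map_smul, ha, smul_add, TensorProduct.smul_tmul',
      TensorProduct.tmul_smul]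
  lie_mem' {a b} (ha : Δ a = _) (hb : Δ b = _) := by
    simp only [Set.mem_ofPred_eq, LieRing.of_associative_ring_bracket, map_sub, map_mul, ha, hb,
      add_mul, mul_add, Algebra.TensorProduct.tmul_mul_tmul, one_mul, mul_one,
      TensorProduct.sub_tmul, TensorProduct.tmul_sub]
    abel

variable {Δ}

theorem mem_primitives {a : A} : a ∈ primitives Δ ↔ Δ a = a ⊗ₜ[k] 1 + 1 ⊗ₜ[k] a :=
  Iff.rfl

variable (Δ) in
/-- The convolution product `f ⋆ id`, that is `x ↦ ∑ f(x₁) x₂` where `Δ x = ∑ x₁ ⊗ x₂`. -/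
def convId (f : A →ₗ[k] A) : A →ₗ[k] A :=
  LinearMap.mul' k A ∘ₗ TensorProduct.map f LinearMap.id ∘ₗ Δ.toLinearMap

theorem convId_algebraMap (f : A →ₗ[k] A) (r : k) :
    convId Δ f (algebraMap k A r) = r • f 1 := by
  simp [convId, Algebra.algebraMap_eq_smul_one, Algebra.TensorProduct.one_def]

theorem convId_of_mem_primitives (f : A →ₗ[k] A) {a : A} (ha : a ∈ primitives Δ) :
    convId Δ f a = f a + f 1 * a := by
  simp [convId, mem_primitives.1 ha]

theorem convId_mul_of_mem_primitives {f g : A →ₗ[k] A} {v : A} (hv : v ∈ primitives Δ)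
    (hfg : ∀ x, f (v * x) = v * g x + ⁅v, f x⁆) (x : A) :
    convId Δ f (v * x) = v * (convId Δ g x + convId Δ f x) := by
  have on_tensors (z : A ⊗[k] A) :
      LinearMap.mul' k A (TensorProduct.map f LinearMap.id ((v ⊗ₜ[k] 1 + 1 ⊗ₜ[k] v) * z)) =
        v * (LinearMap.mul' k A (TensorProduct.map g LinearMap.id z) +
          LinearMap.mul' k A (TensorProduct.map f LinearMap.id z)) := by
    induction z with
    | zero => simp
    | add y z hy hz => simp only [mul_add, map_add, hy, hz]; abel
    | tmul a b =>
      simp only [add_mul, Algebra.TensorProduct.tmul_mul_tmul, one_mul, map_add,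
        TensorProduct.map_tmul, LinearMap.id_apply, LinearMap.mul'_apply, hfg,
        LieRing.of_associative_ring_bracket]
      noncomm_ring
  simpa [convId, mem_primitives.1 hv] using on_tensors (Δ x)

end Primitives

section TensorAlgebra

open TensorAlgebra (ι)

variable {k V : Type*} [CommRing k] [AddCommGroup V] [Module k V]

variable (k V) in
/-- The degree `n` part of the tensor algebra, spanned by the words of length `n`. -/
abbrev homogeneous (n : ℕ) : Submodule k (TensorAlgebra k V) :=
  LinearMap.range (ι k : V →ₗ[k] _) ^ n

instance : GradedAlgebra (homogeneous k V) :=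
  TensorAlgebra.gradedAlgebra

theorem ι_mul_mem_homogeneous (v : V) {n : ℕ} {x : TensorAlgebra k V}
    (hx : x ∈ homogeneous k V n) : ι k v * x ∈ homogeneous k V (n + 1) := by
  rw [homogeneous, pow_succ']
  exact Submodule.mul_mem_mul ⟨v, rfl⟩ hx

theorem mul_ι_mem_homogeneous (v : V) {n : ℕ} {x : TensorAlgebra k V}
    (hx : x ∈ homogeneous k V n) : x * ι k v ∈ homogeneous k V (n + 1) := by
  rw [homogeneous, pow_succ]
  exact Submodule.mul_mem_mul hx ⟨v, rfl⟩

theorem tensorAlgebra_left_induction {motive : TensorAlgebra k V → Prop}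
    (algebraMap : ∀ r, motive (algebraMap k _ r))
    (add : ∀ x y, motive x → motive y → motive (x + y))
    (ι_mul : ∀ v x, motive x → motive (ι k v * x)) (x : TensorAlgebra k V) : motive x := by
  induction x using DirectSum.Decomposition.inductionOn (homogeneous k V) with
  | zero => simpa using algebraMap 0
  | homogeneous x =>
    refine Submodule.pow_induction_on_left _ algebraMap add ?_ x.2
    rintro _ ⟨v, rfl⟩ y hy
    exact ι_mul v y hy
  | add x y hx hy => exact add x y hx hy

variable (k V) in
/-- The projection of the tensor algebra onto its scalars, i.e. the augmentation followed by the
inclusion of `k`. -/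
def scalarPart : TensorAlgebra k V →ₗ[k] TensorAlgebra k V :=
  Algebra.linearMap k _ ∘ₗ TensorAlgebra.algebraMapInv.toLinearMap

theorem scalarPart_algebraMap (r : k) :
    scalarPart k V (algebraMap k _ r) = algebraMap k _ r := by
  simp [scalarPart]

theorem scalarPart_one : scalarPart k V 1 = 1 := by
  simp [scalarPart]

theorem scalarPart_ι_mul (v : V) (x : TensorAlgebra k V) : scalarPart k V (ι k v * x) = 0 := by
  simp [scalarPart, TensorAlgebra.algebraMapInv]

theorem mul_scalarPart (x y : TensorAlgebra k V) :
    y * scalarPart k V x = TensorAlgebra.algebraMapInv x • y := by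
  simp [scalarPart, Algebra.smul_def, Algebra.commutes]

theorem lie_scalarPart (x y : TensorAlgebra k V) : ⁅y, scalarPart k V x⁆ = 0 := by
  simp [scalarPart, LieRing.of_associative_ring_bracket, Algebra.commutes]

theorem scalarPart_mem_homogeneous {n : ℕ} {x : TensorAlgebra k V}
    (hx : x ∈ homogeneous k V n) : scalarPart k V x ∈ homogeneous k V n := by
  induction hx using Submodule.pow_induction_on_left' with
  | algebraMap r => rw [scalarPart_algebraMap]; exact Submodule.algebraMap_mem r
  | add x y n _ _ hx hy => rw [map_add]; exact add_mem hx hy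
  | mem_mul m hm n x _ _ =>
    obtain ⟨v, rfl⟩ := hm
    rw [scalarPart_ι_mul]
    exact zero_mem _

variable (k V) in
/-- One step of the recursion defining the Dynkin operator: a vector `v` sends a pair `(c, y)`,
thought of as `(ε x, D x)`, to `(0, c v + [v, y])`, which is then `(ε (v x), D (v x))`. -/
def dynkinStep : V →ₗ[k] Module.End k (k × TensorAlgebra k V) :=
  LinearMap.mk₂ k (fun v p => (0, p.1 • ι k v + ⁅ι k v, p.2⁆))
    (fun _ _ _ => by ext <;> simp; abel)
    (fun c v p => by ext <;> simp [smul_comm c p.1])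
    (fun _ _ _ => by ext <;> simp [add_smul]; abel)
    (fun _ _ _ => by ext <;> simp [mul_smul])

variable (k V) in
/-- The Dynkin operator of the tensor algebra: it kills scalars, and sends a word `v₁ ⋯ vₙ` with
`n > 0` to `[v₁, [v₂, … [vₙ₋₁, vₙ]]]`. -/
def dynkin : TensorAlgebra k V →ₗ[k] TensorAlgebra k V :=
  LinearMap.snd k k _ ∘ₗ LinearMap.applyₗ (1, 0) ∘ₗ
    (TensorAlgebra.lift k (dynkinStep k V)).toLinearMap

theorem dynkin_algebraMap (r : k) : dynkin k V (algebraMap k _ r) = 0 := by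
  simp [dynkin]

theorem dynkin_one : dynkin k V 1 = 0 := by
  simpa using dynkin_algebraMap (V := V) (1 : k)

theorem lift_dynkinStep_apply_fst (x : TensorAlgebra k V) :
    (TensorAlgebra.lift k (dynkinStep k V) x (1, 0)).1 = TensorAlgebra.algebraMapInv x := by
  induction x using tensorAlgebra_left_induction with
  | algebraMap r => simp
  | add x y hx hy => simp [hx, hy]
  | ι_mul v x _ => simp [dynkinStep, TensorAlgebra.algebraMapInv]

theorem dynkin_ι_mul (v : V) (x : TensorAlgebra k V) :
    dynkin k V (ι k v * x) = ι k v * scalarPart k V x + ⁅ι k v, dynkin k V x⁆ := by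
  rw [mul_scalarPart, ← lift_dynkinStep_apply_fst]
  simp [dynkin, dynkinStep]

theorem dynkin_mem_homogeneous {n : ℕ} {x : TensorAlgebra k V}
    (hx : x ∈ homogeneous k V n) : dynkin k V x ∈ homogeneous k V n := by
  induction hx using Submodule.pow_induction_on_left' with
  | algebraMap r => rw [dynkin_algebraMap]; exact zero_mem _
  | add x y n _ _ hx hy => rw [map_add]; exact add_mem hx hy
  | mem_mul m hm n x hx ih =>
    obtain ⟨v, rfl⟩ := hm
    rw [dynkin_ι_mul, LieRing.of_associative_ring_bracket]
    refine add_mem ?_ (sub_mem ?_ ?_)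
    · exact ι_mul_mem_homogeneous v (scalarPart_mem_homogeneous hx)
    · exact ι_mul_mem_homogeneous v ih
    · exact mul_ι_mem_homogeneous v ih

variable (k V) in
/-- The Lie elements of the tensor algebra: the Lie subalgebra generated by `V`, which is also the
image of the free Lie algebra. -/
def lieElements : LieSubalgebra k (TensorAlgebra k V) :=
  LieSubalgebra.lieSpan k _ (Set.range (ι k : V →ₗ[k] _))

theorem ι_mem_lieElements (v : V) : ι k v ∈ lieElements k V :=
  LieSubalgebra.subset_lieSpan ⟨v, rfl⟩

theorem dynkin_mem_lieElements (x : TensorAlgebra k V) : dynkin k V x ∈ lieElements k V := by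
  induction x using tensorAlgebra_left_induction with
  | algebraMap r => rw [dynkin_algebraMap]; exact zero_mem _
  | add x y hx hy => rw [map_add]; exact add_mem hx hy
  | ι_mul v x hx =>
    have scalar_term : ι k v * scalarPart k V x ∈ lieElements k V := by
      rw [mul_scalarPart]
      exact LieSubalgebra.smul_mem _ _ (ι_mem_lieElements v)
    rw [dynkin_ι_mul]
    exact add_mem scalar_term (LieSubalgebra.lie_mem _ (ι_mem_lieElements v) hx)

variable {Δ : TensorAlgebra k V →ₐ[k] TensorAlgebra k V ⊗[k] TensorAlgebra k V}

theorem lieElements_le_primitives (hΔ : ∀ v, ι k v ∈ primitives Δ) :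
    lieElements k V ≤ primitives Δ :=
  LieSubalgebra.lieSpan_le.2 (Set.range_subset_iff.2 hΔ)

theorem convId_scalarPart (hΔ : ∀ v, ι k v ∈ primitives Δ) (x : TensorAlgebra k V) :
    convId Δ (scalarPart k V) x = x := by
  induction x using tensorAlgebra_left_induction with
  | algebraMap r => rw [convId_algebraMap, scalarPart_one, Algebra.algebraMap_eq_smul_one]
  | add x y hx hy => rw [map_add, hx, hy]
  | ι_mul v x hx =>
    have scalarPart_rec (y) : scalarPart k V (ι k v * y) =
        ι k v * (0 : TensorAlgebra k V →ₗ[k] _) y + ⁅ι k v, scalarPart k V y⁆ := by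
      simp [scalarPart_ι_mul, lie_scalarPart]
    rw [convId_mul_of_mem_primitives (hΔ v) scalarPart_rec, hx]
    simp [convId]

theorem scalarPart_of_mem_primitives (hΔ : ∀ v, ι k v ∈ primitives Δ) {a : TensorAlgebra k V}
    (ha : a ∈ primitives Δ) : scalarPart k V a = 0 := by
  have := convId_of_mem_primitives (scalarPart k V) ha
  rwa [convId_scalarPart hΔ, scalarPart_one, one_mul, right_eq_add] at this

theorem convId_dynkin_of_mem_homogeneous (hΔ : ∀ v, ι k v ∈ primitives Δ)
    {n : ℕ} {x : TensorAlgebra k V} (hx : x ∈ homogeneous k V n) :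
    convId Δ (dynkin k V) x = n • x := by
  induction hx using Submodule.pow_induction_on_left' with
  | algebraMap r => rw [convId_algebraMap, dynkin_one, smul_zero, zero_smul]
  | add x y n _ _ hx hy => rw [map_add, hx, hy, smul_add]
  | mem_mul m hm n x _ ih =>
    obtain ⟨v, rfl⟩ := hm
    rw [convId_mul_of_mem_primitives (hΔ v) (dynkin_ι_mul v), convId_scalarPart hΔ, ih,
      ← succ_nsmul', mul_smul_comm]

theorem decompose_zero_of_mem_primitives (hΔ : ∀ v, ι k v ∈ primitives Δ)
    {a : TensorAlgebra k V} (ha : a ∈ primitives Δ) :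
    (DirectSum.decompose (homogeneous k V) a 0 : TensorAlgebra k V) = 0 := by
  obtain ⟨r, hr⟩ : ∃ r, algebraMap k _ r =
      (DirectSum.decompose (homogeneous k V) a 0 : TensorAlgebra k V) :=
    Submodule.mem_one.1 (DirectSum.decompose (homogeneous k V) a 0).2
  have scalarPart_eq_zero := apply_decompose_eq_of_apply_eq (homogeneous k V) (g := 0)
    (fun _ _ => scalarPart_mem_homogeneous) (fun _ _ _ => zero_mem _)
    (scalarPart_of_mem_primitives hΔ ha) 0
  rwa [← hr, scalarPart_algebraMap, hr] at scalarPart_eq_zero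

theorem dynkin_decompose_of_mem_primitives (hΔ : ∀ v, ι k v ∈ primitives Δ)
    {a : TensorAlgebra k V} (ha : a ∈ primitives Δ) (n : ℕ) :
    dynkin k V (DirectSum.decompose (homogeneous k V) a n) =
      n • (DirectSum.decompose (homogeneous k V) a n : TensorAlgebra k V) := by
  have convId_mem (i x) (hx : x ∈ homogeneous k V i) :
      convId Δ (dynkin k V) x ∈ homogeneous k V i := by
    rw [convId_dynkin_of_mem_homogeneous hΔ hx]
    exact nsmul_mem hx i
  have dynkin_eq_convId : dynkin k V a = convId Δ (dynkin k V) a := by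
    rw [convId_of_mem_primitives _ ha, dynkin_one, zero_mul, add_zero]
  rw [← convId_dynkin_of_mem_homogeneous hΔ (SetLike.coe_mem _)]
  exact apply_decompose_eq_of_apply_eq (homogeneous k V)
    (fun _ _ => dynkin_mem_homogeneous) convId_mem dynkin_eq_convId n

theorem decompose_mem_lieElements_of_mem_primitives [Algebra ℚ k]
    (hΔ : ∀ v, ι k v ∈ primitives Δ) {a : TensorAlgebra k V} (ha : a ∈ primitives Δ) (n : ℕ) :
    (DirectSum.decompose (homogeneous k V) a n : TensorAlgebra k V) ∈ lieElements k V := by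
  obtain rfl | hn := eq_or_ne n 0
  · rw [decompose_zero_of_mem_primitives hΔ ha]
    exact zero_mem _
  · have isUnit_n : IsUnit (n : k) := by
      simpa using (isUnit_iff_ne_zero.2 (Nat.cast_ne_zero.2 hn : (n : ℚ) ≠ 0)).map (algebraMap ℚ k)
    have smul_mem : (n : k) • (DirectSum.decompose (homogeneous k V) a n : TensorAlgebra k V) ∈
        (lieElements k V).toSubmodule := by
      rw [Nat.cast_smul_eq_nsmul, ← dynkin_decompose_of_mem_primitives hΔ ha]
      exact dynkin_mem_lieElements _
    exact (Submodule.smul_mem_iff_of_isUnit _ isUnit_n).1 smul_mem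

theorem primitives_eq_lieElements [Algebra ℚ k] (hΔ : ∀ v, ι k v ∈ primitives Δ) :
    primitives Δ = lieElements k V := by
  classical
  refine le_antisymm (fun a ha => ?_) (lieElements_le_primitives hΔ)
  rw [← DirectSum.sum_support_decompose (homogeneous k V) a]
  exact sum_mem fun n _ => decompose_mem_lieElements_of_mem_primitives hΔ ha n

end TensorAlgebra

end Friedrichs

theorem stmt6_general {k V : Type*} [CommRing k] [Algebra ℚ k] [AddCommGroup V] [Module k V]
    (Δ : TensorAlgebra k V →ₐ[k] TensorAlgebra k V ⊗[k] TensorAlgebra k V)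
    (hΔ : ∀ v : V, Δ (TensorAlgebra.ι k v) =
      TensorAlgebra.ι k v ⊗ₜ[k] 1 + 1 ⊗ₜ[k] TensorAlgebra.ι k v) :
    {a : TensorAlgebra k V | Δ a = a ⊗ₜ[k] 1 + 1 ⊗ₜ[k] a} =
      Set.range (FreeLieAlgebra.lift k (fun v : V => TensorAlgebra.ι k v)) := by
  have primitives_eq_range : Friedrichs.primitives Δ =
      (FreeLieAlgebra.lift k (fun v : V => TensorAlgebra.ι k v)).range :=
    (Friedrichs.primitives_eq_lieElements hΔ).trans (Friedrichs.range_freeLieAlgebra_lift _).symm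
  rw [← LieHom.coe_range, ← primitives_eq_range]
  rfl

/-- Friedrichs' criterion: in characteristic zero, the primitive elements of the
tensor algebra `T(V)` — for the coproduct `Δ` which is the unique algebra map with
`Δ(v) = v ⊗ 1 + 1 ⊗ v` — are exactly the image of the canonical Lie algebra
homomorphism from the free Lie algebra on `V` into `T(V)` (with its commutator
bracket) extending the inclusion of `V`. -/
theorem stmt6 (k : Type) [Field k] [CharZero k]
    (V : Type) [AddCommGroup V] [Module k V]
    (Δ : TensorAlgebra k V →ₐ[k] TensorAlgebra k V ⊗[k] TensorAlgebra k V)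
    (hΔ : ∀ v : V, Δ (TensorAlgebra.ι k v) =
      TensorAlgebra.ι k v ⊗ₜ[k] 1 + 1 ⊗ₜ[k] TensorAlgebra.ι k v)
    (f : FreeLieAlgebra k V →ₗ⁅k⁆ TensorAlgebra k V)
    (hf : f = FreeLieAlgebra.lift k (fun v : V => TensorAlgebra.ι k v)) :
    {a : TensorAlgebra k V | Δ a = a ⊗ₜ[k] 1 + 1 ⊗ₜ[k] a} = Set.range f := by
  rw [hf]
  exact stmt6_general Δ hΔ
end
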